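/- Let G = diag(g₁,g₂,g₃), gᵢ > 0 distinct. Define h₁ = min{g₁+g₂, g₂+g₃, g₃+g₁}, h₂ = max{(g₁−g₂)², (g₂−g₃)², (g₃−g₁)²}, h₃ = max{(g₁+g₂)², (g₂+g₃)², (g₃+g₁)²}, and b₁ = h₁/(h₂+h₃). Then for all R, R_d ∈ SO(3): b₁ ‖e_R‖² ≤ Ψ(R,R_d), where Ψ(R,R_d) = (1/2) tr(G(I − R_dᵀR)) and e_R = (1/2)(G R_dᵀ R − Rᵀ R_d G)^∨. -/

import Mathlib

open Matrix

noncomputable section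

/-- The hat map `ℝ³ → 𝔰𝔬(3)`, with `hat x *ᵥ y = x × y`. -/
def hat (x : Fin 3 → ℝ) : Matrix (Fin 3) (Fin 3) ℝ :=
  !![0, -x 2, x 1; x 2, 0, -x 0; -x 1, x 0, 0]

/-- The vee map, inverse of the hat map on skew-symmetric matrices. -/
def vee (A : Matrix (Fin 3) (Fin 3) ℝ) : Fin 3 → ℝ :=
  ![A 2 1, A 0 2, A 1 0]

/-- Membership in the special orthogonal group SO(3). -/
def SO3 (R : Matrix (Fin 3) (Fin 3) ℝ) : Prop :=
  Rᵀ * R = 1 ∧ R.det = 1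

/-- Euclidean norm on `ℝ³` (and `ℝ²`). -/
def norm3 (x : Fin 3 → ℝ) : ℝ := Real.sqrt (x ⬝ᵥ x)

def norm2v (x : Fin 2 → ℝ) : ℝ := Real.sqrt (x ⬝ᵥ x)

/-- Attitude error function `Ψ(R,R_d) = (1/2) tr (G (I - R_dᵀ R))`. -/
def Psi (G R Rd : Matrix (Fin 3) (Fin 3) ℝ) : ℝ :=
  (1 / 2) * (G * (1 - Rdᵀ * R)).trace

/-- Attitude error vector `e_R = (1/2) (G R_dᵀ R - Rᵀ R_d G)^∨`. -/
def eR (G R Rd : Matrix (Fin 3) (Fin 3) ℝ) : Fin 3 → ℝ :=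
  (1 / 2 : ℝ) • vee (G * Rdᵀ * R - Rᵀ * Rd * G)

/-- Third standard basis vector of `ℝ³`. -/
def e3 : Fin 3 → ℝ := ![0, 0, 1]

lemma diag_aux (Q : Matrix (Fin 3) (Fin 3) ℝ) (h1 : Qᵀ * Q = 1) (hd : Q.det = 1) :
    (0 ≤ 1 + Q 0 0 - Q 1 1 - Q 2 2 ∧ 0 ≤ 1 + Q 1 1 - Q 0 0 - Q 2 2 ∧
      0 ≤ 1 + Q 2 2 - Q 0 0 - Q 1 1) ∧
    Q 0 1 ^ 2 + Q 1 0 ^ 2 + Q 0 2 ^ 2 + Q 2 0 ^ 2 + Q 1 2 ^ 2 + Q 2 1 ^ 2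
      = 3 - Q 0 0 ^ 2 - Q 1 1 ^ 2 - Q 2 2 ^ 2 := by
  have h2 : Q * Qᵀ = 1 := mul_eq_one_comm.mp h1
  have hadj : Q.adjugate = Qᵀ := by
    have h3 : Q.adjugate * Q = 1 := by rw [adjugate_mul, hd, one_smul]
    calc Q.adjugate = Q.adjugate * (Q * Qᵀ) := by rw [h2, mul_one]
      _ = Qᵀ := by rw [← mul_assoc, h3, one_mul]
  rw [adjugate_fin_three] at hadj
  have a0 := congrFun (congrFun hadj 0) 0
  have a1 := congrFun (congrFun hadj 1) 1
  have a2 := congrFun (congrFun hadj 2) 2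
  have c0 := congrFun (congrFun h1 0) 0
  have c1 := congrFun (congrFun h1 1) 1
  have c2 := congrFun (congrFun h1 2) 2
  have r0 := congrFun (congrFun h2 0) 0
  have r1 := congrFun (congrFun h2 1) 1
  have r2 := congrFun (congrFun h2 2) 2
  simp [Matrix.mul_apply, Fin.sum_univ_three] at a0 a1 a2 c0 c1 c2 r0 r1 r2
  generalize Q 0 0 = a at *
  generalize Q 0 1 = b at *
  generalize Q 0 2 = c at *
  generalize Q 1 0 = d at *
  generalize Q 1 1 = e at *
  generalize Q 1 2 = f at *
  generalize Q 2 0 = g at *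
  generalize Q 2 1 = h at *
  generalize Q 2 2 = i at *
  have p01 : (1 + a - e - i) * (1 + e - a - i) = (b + d) ^ 2 := by linarith
  have p02 : (1 + a - e - i) * (1 + i - a - e) = (c + g) ^ 2 := by linarith
  have p12 : (1 + e - a - i) * (1 + i - a - e) = (f + h) ^ 2 := by linarith
  have p03 : (1 + a - e - i) * (1 + a + e + i) = (f - h) ^ 2 := by linarith
  have p13 : (1 + e - a - i) * (1 + a + e + i) = (c - g) ^ 2 := by linarith
  have p23 : (1 + i - a - e) * (1 + a + e + i) = (b - d) ^ 2 := by linarith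
  refine ⟨⟨?_, ?_, ?_⟩, ?_⟩
  · linarith [sq_nonneg (1 + a - e - i), sq_nonneg (b + d), sq_nonneg (c + g), sq_nonneg (f - h)]
  · linarith [sq_nonneg (1 + e - a - i), sq_nonneg (b + d), sq_nonneg (f + h), sq_nonneg (c - g)]
  · linarith [sq_nonneg (1 + i - a - e), sq_nonneg (c + g), sq_nonneg (f + h), sq_nonneg (b - d)]
  · linarith

lemma cs_aux (u v x y H : ℝ) (h : (u - v) ^ 2 + (u + v) ^ 2 ≤ H) :
    (u * x - v * y) ^ 2 ≤ H / 2 * (x ^ 2 + y ^ 2) := by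
  have : (u ^ 2 + v ^ 2) * (x ^ 2 + y ^ 2) ≤ H / 2 * (x ^ 2 + y ^ 2) := by
    apply mul_le_mul_of_nonneg_right _ (by positivity)
    linarith
  linarith [sq_nonneg (u * y + v * x)]

/-- lower bound `b₁ ‖e_R‖² ≤ Ψ(R,R_d)`. -/
theorem psi_lower_bound (g : Fin 3 → ℝ) (hpos : ∀ i, 0 < g i)
    (hdist : Function.Injective g)
    (h₁ h₂ h₃ b₁ : ℝ)
    (hh₁ : h₁ = min (g 0 + g 1) (min (g 1 + g 2) (g 2 + g 0)))
    (hh₂ : h₂ = max ((g 0 - g 1) ^ 2) (max ((g 1 - g 2) ^ 2) ((g 2 - g 0) ^ 2)))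
    (hh₃ : h₃ = max ((g 0 + g 1) ^ 2) (max ((g 1 + g 2) ^ 2) ((g 2 + g 0) ^ 2)))
    (hb₁ : b₁ = h₁ / (h₂ + h₃))
    (R Rd : Matrix (Fin 3) (Fin 3) ℝ) (hR : SO3 R) (hRd : SO3 Rd) :
    b₁ * norm3 (eR (diagonal g) R Rd) ^ 2 ≤ Psi (diagonal g) R Rd := by
  obtain ⟨Q, hQ⟩ : ∃ Q, Q = Rdᵀ * R := ⟨_, rfl⟩
  have hQ1 : Qᵀ * Q = 1 := by
    have h2 : Rd * Rdᵀ = 1 := mul_eq_one_comm.mp hRd.1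
    rw [hQ, transpose_mul, transpose_transpose]
    calc Rᵀ * Rd * (Rdᵀ * R) = Rᵀ * (Rd * Rdᵀ) * R := by simp only [mul_assoc]
      _ = 1 := by rw [h2, mul_one, hR.1]
  have hQd : Q.det = 1 := by rw [hQ, det_mul, det_transpose, hR.2, hRd.2, one_mul]
  obtain ⟨⟨q0, q1, q2⟩, hs⟩ := diag_aux Q hQ1 hQd
  have hPsi : Psi (diagonal g) R Rd
      = (1 / 2) * (g 0 * (1 - Q 0 0) + g 1 * (1 - Q 1 1) + g 2 * (1 - Q 2 2)) := by
    rw [Psi, ← hQ]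
    simp [Matrix.trace, Fin.sum_univ_three, diagonal_mul]
  have hE : norm3 (eR (diagonal g) R Rd) ^ 2
      = (1 / 4) * ((g 2 * Q 2 1 - g 1 * Q 1 2) ^ 2 + (g 0 * Q 0 2 - g 2 * Q 2 0) ^ 2
        + (g 1 * Q 1 0 - g 0 * Q 0 1) ^ 2) := by
    have hT : Rᵀ * Rd = Qᵀ := by rw [hQ, transpose_mul, transpose_transpose]
    rw [norm3, Real.sq_sqrt (by
      simp only [dotProduct]; exact Finset.sum_nonneg fun i _ => mul_self_nonneg _), eR,
      mul_assoc, ← hQ, hT]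
    simp [vee, dotProduct, Fin.sum_univ_three, diagonal_mul, mul_diagonal]
    ring
  have m1 : h₁ ≤ g 0 + g 1 := by rw [hh₁]; exact min_le_left _ _
  have m2 : h₁ ≤ g 1 + g 2 := by rw [hh₁]; exact (min_le_right _ _).trans (min_le_left _ _)
  have m3 : h₁ ≤ g 2 + g 0 := by rw [hh₁]; exact (min_le_right _ _).trans (min_le_right _ _)
  have d1 : (g 0 - g 1) ^ 2 ≤ h₂ := by rw [hh₂]; exact le_max_left _ _
  have d2 : (g 1 - g 2) ^ 2 ≤ h₂ := by
    rw [hh₂]; exact (le_max_left _ _).trans (le_max_right _ _)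
  have d3 : (g 2 - g 0) ^ 2 ≤ h₂ := by
    rw [hh₂]; exact (le_max_right _ _).trans (le_max_right _ _)
  have s1 : (g 0 + g 1) ^ 2 ≤ h₃ := by rw [hh₃]; exact le_max_left _ _
  have s2 : (g 1 + g 2) ^ 2 ≤ h₃ := by
    rw [hh₃]; exact (le_max_left _ _).trans (le_max_right _ _)
  have s3 : (g 2 + g 0) ^ 2 ≤ h₃ := by
    rw [hh₃]; exact (le_max_right _ _).trans (le_max_right _ _)
  have g0 := hpos 0
  have g1 := hpos 1
  have g2 := hpos 2
  have h1pos : 0 < h₁ := by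
    rw [hh₁]; exact lt_min (by linarith) (lt_min (by linarith) (by linarith))
  have hHpos : 0 < h₂ + h₃ := by
    have : 0 < (g 0 + g 1) ^ 2 := by positivity
    linarith [sq_nonneg (g 0 - g 1)]
  have e1 := cs_aux (g 2) (g 1) (Q 2 1) (Q 1 2) (h₂ + h₃) (by linarith)
  have e2 := cs_aux (g 0) (g 2) (Q 0 2) (Q 2 0) (h₂ + h₃) (by linarith)
  have e3' := cs_aux (g 1) (g 0) (Q 1 0) (Q 0 1) (h₂ + h₃) (by linarith)
  have hbound : norm3 (eR (diagonal g) R Rd) ^ 2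
      ≤ (h₂ + h₃) * ((3 - Q 0 0 - Q 1 1 - Q 2 2) / 4) := by
    have k : (h₂ + h₃) * ((3 - Q 0 0 ^ 2 - Q 1 1 ^ 2 - Q 2 2 ^ 2) / 8)
        ≤ (h₂ + h₃) * ((3 - Q 0 0 - Q 1 1 - Q 2 2) / 4) := by
      apply mul_le_mul_of_nonneg_left _ hHpos.le
      linarith [sq_nonneg (1 - Q 0 0), sq_nonneg (1 - Q 1 1), sq_nonneg (1 - Q 2 2)]
    rw [← hs] at k
    rw [hE]
    linarith
  have hlow : h₁ * ((3 - Q 0 0 - Q 1 1 - Q 2 2) / 4) ≤ Psi (diagonal g) R Rd := by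
    rw [hPsi]
    have t0 := mul_le_mul_of_nonneg_right m2 q0
    have t1 := mul_le_mul_of_nonneg_right m3 q1
    have t2 := mul_le_mul_of_nonneg_right m1 q2
    linarith
  refine le_trans ?_ hlow
  rw [hb₁]
  calc h₁ / (h₂ + h₃) * norm3 (eR (diagonal g) R Rd) ^ 2
      ≤ h₁ / (h₂ + h₃) * ((h₂ + h₃) * ((3 - Q 0 0 - Q 1 1 - Q 2 2) / 4)) :=
        mul_le_mul_of_nonneg_left hbound (by positivity)
    _ = h₁ * ((3 - Q 0 0 - Q 1 1 - Q 2 2) / 4) := by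
        field_simp
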